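/- If f, g : D → ℂ are holomorphic on a simply connected domain D, then the three 1-forms ω₁ = i/2((f²+g²)dz − (conj f² + conj g²)dz̄), ω₂ = 1/2((g²−f²)dz + (conj g² − conj f²)dz̄), ω₃ = fg dz + (conj f)(conj g) dz̄ are real-valued and closed, hence exact; the resulting map x = (∫ω₁, ∫ω₂, ∫ω₃) : D → ℝ³ is well-defined (path-independent). -/

import Mathlib

/-!
Each form is `ω_k = Re (φ_k dz)` with `φ_k` holomorphic, so it is real and it suffices to find
primitives of the `φ_k`. Holomorphic functions have primitives on discs, and two primitives differ
by a locally constant function. Hence the germs of primitives form a covering space of `D`, which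
has a global section because `D` is simply connected.
-/

open Complex

/-- The Weierstrass–Enneper 1-forms: `ω k z` is the ℝ-linear-in-`w` integrand,
evaluated on a tangent vector `w ∈ ℂ ≅ ℝ²` (so `dz(w) = w`, `dz̄(w) = conj w`). -/
noncomputable def weierstrassForm (f g : ℂ → ℂ) : Fin 3 → ℂ → ℂ → ℂ
  | 0 => fun z w => I / 2 * ((f z ^ 2 + g z ^ 2) * w -
      ((starRingEnd ℂ (f z)) ^ 2 + (starRingEnd ℂ (g z)) ^ 2) * starRingEnd ℂ w)
  | 1 => fun z w => 1 / 2 * ((g z ^ 2 - f z ^ 2) * w +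
      ((starRingEnd ℂ (g z)) ^ 2 - (starRingEnd ℂ (f z)) ^ 2) * starRingEnd ℂ w)
  | 2 => fun z w => f z * g z * w + starRingEnd ℂ (f z) * starRingEnd ℂ (g z) * starRingEnd ℂ w

open scoped Topology

section Covering

theorem exists_continuous_section_of_simplyConnected {X F : Type*} {E : X → Type*}
    [TopologicalSpace X] [SimplyConnectedSpace X] [LocallyPathConnectedSpace X]
    [TopologicalSpace F] [DiscreteTopology F] [TopologicalSpace (Bundle.TotalSpace F E)]
    [∀ x, TopologicalSpace (E x)] [FiberBundle F E] [Nonempty (Bundle.TotalSpace F E)] :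
    ∃ s : ∀ x, E x, Continuous fun x ↦ (⟨x, s x⟩ : Bundle.TotalSpace F E) := by
  obtain ⟨e₀⟩ := ‹Nonempty (Bundle.TotalSpace F E)›
  have hcov : IsCoveringMap (Bundle.TotalSpace.proj : Bundle.TotalSpace F E → X) :=
    FiberBundle.isCoveringMap
  obtain ⟨s, ⟨-, hs⟩, -⟩ :=
    hcov.existsUnique_continuousMap_lifts (ContinuousMap.id X) e₀.proj e₀ rfl
  have hproj : ∀ x, (s x).proj = x := congrFun hs
  refine ⟨fun x ↦ hproj x ▸ (s x).2, s.continuous.congr fun x ↦ ?_⟩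
  exact Bundle.TotalSpace.ext (hproj x) (by simp)

theorem continuousOn_iff_eventually_eq_of_isOpen {X Y : Type*} [TopologicalSpace X]
    [TopologicalSpace Y] [DiscreteTopology Y] {f : X → Y} {s : Set X} (hs : IsOpen s) :
    ContinuousOn f s ↔ ∀ x ∈ s, ∀ᶠ y in 𝓝 x, f y = f x := by
  simp only [hs.continuousOn_iff, ContinuousAt, nhds_discrete, Filter.tendsto_pure]

variable {X ι A : Type*} [TopologicalSpace X] [AddGroup A] {U : ι → Set X} {F : ι → X → A}

/-- The bundle with discrete fibre `A` whose transition functions are the translations by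
`F i - F j` on `U i ∩ U j`. A section with coordinate `v i` over each `U i` amounts to a function
on `X` that equals `v i + F i` on `U i`. The chart used to identify the fibre over `x` with `A` is
`idx x`. -/
def differenceBundleCore [TopologicalSpace A] [DiscreteTopology A] (hU : ∀ i, IsOpen (U i))
    (idx : X → ι) (hidx : ∀ x, x ∈ U (idx x))
    (hF : ∀ i j, ContinuousOn (fun x ↦ F i x - F j x) (U i ∩ U j)) :
    FiberBundleCore ι X A where
  baseSet := U
  isOpen_baseSet := hU
  indexAt := idx
  mem_baseSet_at := hidx
  coordChange i j x v := v + (F i x - F j x)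
  coordChange_self i x _ v := by rw [sub_self, add_zero]
  continuousOn_coordChange i j :=
    continuousOn_snd.add ((hF i j).comp continuousOn_fst fun _ hp ↦ hp.1)
  coordChange_comp i j k x _ v := by rw [add_assoc, sub_add_sub_cancel]

/-- The vanishing of the first Čech cohomology with constant coefficients, for cocycles given as
differences of functions that need not be continuous. -/
theorem exists_eventually_sub_eq_of_simplyConnected [SimplyConnectedSpace X]
    [LocallyPathConnectedSpace X] (hU : ∀ i, IsOpen (U i)) (hcover : ∀ x, ∃ i, x ∈ U i)
    (hF : ∀ i j, ∀ x ∈ U i ∩ U j, ∀ᶠ y in 𝓝 x, F i y - F j y = F i x - F j x) :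
    ∃ G : X → A, ∀ i, ∀ x ∈ U i, ∀ᶠ y in 𝓝 x, G y - F i y = G x - F i x := by
  let : TopologicalSpace A := ⊥
  have : DiscreteTopology A := ⟨rfl⟩
  choose idx hidx using hcover
  let Z := differenceBundleCore hU idx hidx fun i j ↦
    (continuousOn_iff_eventually_eq_of_isOpen ((hU i).inter (hU j))).2 (hF i j)
  obtain ⟨x₀⟩ : Nonempty X := inferInstance
  have : Nonempty Z.TotalSpace := ⟨⟨x₀, (0 : A)⟩⟩
  obtain ⟨s, hs⟩ := exists_continuous_section_of_simplyConnected (F := A) (E := Z.Fiber)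
  let v : X → A := s
  refine ⟨fun x ↦ v x + F (idx x) x, fun i ↦
    (continuousOn_iff_eventually_eq_of_isOpen (hU i)).1 ?_⟩
  have hcoord : ContinuousOn (fun x ↦ v x + (F (idx x) x - F i x)) (U i) :=
    continuous_snd.comp_continuousOn
      ((Z.localTriv i).continuousOn.comp hs.continuousOn fun _ hx ↦ hx)
  simpa only [add_sub_assoc] using hcoord

end Covering

section Primitive

variable {𝕜 E F : Type*} [RCLike 𝕜] [NormedAddCommGroup E] [NormedSpace 𝕜 E]
  [NormedAddCommGroup F] [NormedSpace 𝕜 F] {ω : E → E →L[𝕜] F}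

theorem eventually_sub_eq_of_eventually_hasFDerivAt {φ ψ : E → F} {x : E}
    (hφ : ∀ᶠ y in 𝓝 x, HasFDerivAt φ (ω y) y) (hψ : ∀ᶠ y in 𝓝 x, HasFDerivAt ψ (ω y) y) :
    ∀ᶠ y in 𝓝 x, φ y - ψ y = φ x - ψ x := by
  let : NormedSpace ℝ E := .restrictScalars ℝ 𝕜 E
  obtain ⟨s, hs, hso, hxs⟩ := eventually_nhds_iff.1 (hφ.and hψ)
  have hderiv : ∀ y ∈ s, HasFDerivAt (fun y ↦ φ y - ψ y) (0 : E →L[𝕜] F) y := fun y hy ↦ by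
    simpa only [sub_self] using (hs y hy).1.fun_sub (hs y hy).2
  have hopen : IsOpen (s ∩ (fun y ↦ φ y - ψ y) ⁻¹' {φ x - ψ x}) :=
    hso.isOpen_inter_preimage_of_fderiv_eq_zero
      (fun y hy ↦ (hderiv y hy).differentiableAt.differentiableWithinAt)
      (fun y hy ↦ (hderiv y hy).fderiv) _
  exact Filter.mem_of_superset (hopen.mem_nhds ⟨hxs, rfl⟩) fun y hy ↦ hy.2

theorem exists_hasFDerivAt_of_simplyConnected {D : Set E} (hD : IsOpen D) [SimplyConnectedSpace D]
    (hω : ∀ x ∈ D, ∃ φ : E → F, ∀ᶠ y in 𝓝 x, HasFDerivAt φ (ω y) y) :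
    ∃ φ : E → F, ∀ x ∈ D, HasFDerivAt φ (ω x) x := by
  let : NormedSpace ℝ E := .restrictScalars ℝ 𝕜 E
  have : LocallyPathConnectedSpace D := hD.locallyPathConnectedSpace
  choose P hP using fun i : D ↦ hω i i.2
  choose V hPV hVo hmem using fun i ↦ eventually_nhds_iff.1 (hP i)
  have hPnhds (i : D) {x : E} (hx : x ∈ V i) : ∀ᶠ y in 𝓝 x, HasFDerivAt (P i) (ω y) y :=
    Filter.mem_of_superset ((hVo i).mem_nhds hx) (hPV i)
  have hdiff (i j x : D) (hx : (x : E) ∈ V i ∩ V j) :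
      ∀ᶠ y : D in 𝓝 x, P i y - P j y = P i x - P j x :=
    continuous_subtype_val.continuousAt.eventually
      (eventually_sub_eq_of_eventually_hasFDerivAt (hPnhds i hx.1) (hPnhds j hx.2))
  obtain ⟨G, hG⟩ := exists_eventually_sub_eq_of_simplyConnected
    (U := fun i : D ↦ ((↑) : D → E) ⁻¹' V i) (F := fun i x ↦ P i x)
    (fun i ↦ (hVo i).preimage continuous_subtype_val) (fun i ↦ ⟨i, hmem i⟩) hdiff
  refine ⟨Function.extend (↑) G 0, fun x hx ↦ ?_⟩
  lift x to D using hx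
  have hlocal : Function.extend (↑) G 0 =ᶠ[𝓝 (x : E)] fun y ↦ P x y + (G x - P x x) := by
    rw [Filter.EventuallyEq, ← hD.isOpenEmbedding_subtypeVal.map_nhds_eq x, Filter.eventually_map]
    filter_upwards [hG x x (hmem x)] with y hy
    rw [Subtype.val_injective.extend_apply, ← hy, add_sub_cancel]
  exact ((hPV x x (hmem x)).add_const _).congr_of_eventuallyEq hlocal

end Primitive

theorem isExactOn_of_simplyConnected {F : Type*} [NormedAddCommGroup F] [NormedSpace ℂ F]
    [CompleteSpace F] {D : Set ℂ} (hD : IsOpen D) [SimplyConnectedSpace D] {h : ℂ → F}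
    (hh : DifferentiableOn ℂ h D) : IsExactOn h D := by
  refine exists_hasFDerivAt_of_simplyConnected (ω := fun z ↦ .toSpanSingleton ℂ (h z)) hD
    fun z hz ↦ ?_
  obtain ⟨r, hr, hball⟩ := Metric.isOpen_iff.1 hD z hz
  obtain ⟨H, hH⟩ := (hh.mono hball).isExactOn_ball
  exact ⟨H, Filter.mem_of_superset (Metric.ball_mem_nhds z hr) fun w hw ↦ (hH w hw).hasFDerivAt⟩

theorem hasFDerivAt_re_of_hasDerivAt {H : ℂ → ℂ} {a z : ℂ} (hH : HasDerivAt H a z) :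
    HasFDerivAt (fun z ↦ (H z).re)
      (reCLM ∘L (ContinuousLinearMap.toSpanSingleton ℂ a).restrictScalars ℝ) z :=
  reCLM.hasFDerivAt.comp z (hH.hasFDerivAt.restrictScalars ℝ)

/-- The holomorphic coefficients `φ_k` of the Weierstrass–Enneper representation, normalised so
that `ω_k = Re (φ_k dz)`. -/
def weierstrassCoeff (f g : ℂ → ℂ) : Fin 3 → ℂ → ℂ
  | 0 => fun z ↦ I * (f z ^ 2 + g z ^ 2)
  | 1 => fun z ↦ g z ^ 2 - f z ^ 2
  | 2 => fun z ↦ 2 * (f z * g z)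

theorem weierstrassForm_eq_ofReal_re (f g : ℂ → ℂ) (k : Fin 3) (z w : ℂ) :
    weierstrassForm f g k z w = ((weierstrassCoeff f g k z * w).re : ℂ) := by
  rw [re_eq_add_conj]
  fin_cases k <;>
    simp only [weierstrassForm, weierstrassCoeff, map_mul, map_add, map_sub, map_pow, conj_I,
      conj_ofNat] <;>
    ring

theorem differentiableOn_weierstrassCoeff {f g : ℂ → ℂ} {D : Set ℂ}
    (hf : DifferentiableOn ℂ f D) (hg : DifferentiableOn ℂ g D) (k : Fin 3) :
    DifferentiableOn ℂ (weierstrassCoeff f g k) D := by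
  fin_cases k
  · exact ((hf.pow 2).add (hg.pow 2)).const_mul I
  · exact (hg.pow 2).sub (hf.pow 2)
  · exact (hf.mul hg).const_mul 2

theorem weierstrass_forms_real_closed_exact (D : Set ℂ) (hD : IsOpen D)
    (hsc : SimplyConnectedSpace D) (f g : ℂ → ℂ)
    (hf : DifferentiableOn ℂ f D) (hg : DifferentiableOn ℂ g D) :
    (∀ k, ∀ z ∈ D, ∀ w : ℂ, (weierstrassForm f g k z w).im = 0) ∧
    ∃ x : Fin 3 → ℂ → ℝ, ∀ k, ∀ z ∈ D, ∃ L : ℂ →L[ℝ] ℝ,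
      HasFDerivAt (x k) L z ∧ ∀ w : ℂ, (L w : ℝ) = (weierstrassForm f g k z w).re := by
  refine ⟨fun k z _ w ↦ by rw [weierstrassForm_eq_ofReal_re, ofReal_im], ?_⟩
  choose H hH using fun k ↦
    isExactOn_of_simplyConnected hD (differentiableOn_weierstrassCoeff hf hg k)
  refine ⟨fun k z ↦ (H k z).re, fun k z hz ↦
    ⟨_, hasFDerivAt_re_of_hasDerivAt (hH k z hz), fun w ↦ ?_⟩⟩
  rw [weierstrassForm_eq_ofReal_re, ofReal_re, mul_comm]
  rfl
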